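/- Let C be a triangulated category with a weight structure w, let S be a set of morphisms of the heart Hw, let B be the set of cones of elements of S, and let 𝔻 be the triangulated subcategory of C generated by B. Let H denote the full subcategory of the Verdier quotient C/𝔻 whose objects are those of C_{w=0}, and let u : Hw → H be the functor induced by the localization functor. Then u is the universal additive functor inverting S: for any additive category A' and any additive functor F : Hw → A', F factors through u if and only if F(s) is an isomorphism for every s ∈ S, and in that case the factorization through u is unique. -/

import Mathlib

/-!
An additive functor `F` out of `Hw` factors uniquely through `u` as soon as, for every object `Y`
of `Hw` and every `Z`, morphisms of additive presheaves `Hom(u -, u Y) ⟶ Hom(F -, Z)` correspond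
to morphisms `F Y ⟶ Z` by evaluation at the identity. With `Hom(-, Y)` in place of `Hom(u -, u Y)`
this is the Yoneda lemma, so one has to extend presheaf morphisms from `Hom(-, Y)` to
`Hom(u -, u Y)`. Since `Hom(u -, u Y)` is the filtered colimit of the `Hom(-, Y')` over the
morphisms `t : Y ⟶ Y'` with cone in `𝔻`, it suffices to extend uniquely to `Hom(-, Y')` for
cofinally many `t`.

By the orthogonality axiom the set `B` of cones of `S` is weakly negative, so every object of `𝔻`
is an extension of an object of `B_{≥ 0}` by one of `B_{≤ -1}`. There are no nonzero morphisms from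
`B_{≤ -1}` to `Y[1]`, so the `t` with cone in `B_{≥ 0}` are cofinal. By the octahedral axiom such a
`t` is a composition of morphisms whose cones are of the form `K[l]` with `l ≥ 0` and `K` the cone
of some `s ∈ S`. For `l ≥ 1` the presheaf `Hom(-, Y')` on `Hw` is a quotient of `Hom(-, Y)` by
elements that every presheaf morphism to `Hom(F -, Z)` kills. For `l = 0` it is the pushout of
`Hom(-, Y)` along `s`, and the extension exists because `F` inverts `s`.
-/

open CategoryTheory Limits Pretriangulated ZeroObject

universe v u v' u'

section TriangulatedPrelude

variable {C : Type u} [Category.{v} C] [HasZeroObject C] [HasShift C ℤ] [Preadditive C]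
  [∀ n : ℤ, (shiftFunctor C n).Additive] [Pretriangulated C]

/-- The objects of the smallest strict full triangulated subcategory of `C`
containing the set of objects `B`. -/
inductive genSub (B : Set C) : C → Prop
  | of (X : C) (hX : X ∈ B) : genSub B X
  | zero (X : C) (hX : IsZero X) : genSub B X
  | shift (X : C) (n : ℤ) (hX : genSub B X) : genSub B (X⟦n⟧)
  | ext₂ (T : Triangle C) (hT : T ∈ distTriang C) (h₁ : genSub B T.obj₁)
      (h₃ : genSub B T.obj₃) : genSub B T.obj₂

/-- The triangulated subcategory of `C` generated by `B`. -/
def genSubcat (B : Set C) : ObjectProperty C :=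
  genSub B

instance genSubcat_isTriangulated (B : Set C) : (genSubcat B).IsTriangulated where
  exists_zero := ⟨0, isZero_zero _, genSub.zero _ (isZero_zero _)⟩
  isStableUnderShiftBy n := ⟨fun X h => genSub.shift X n h⟩
  ext₂' T hT h₁ h₃ :=
    ObjectProperty.le_isoClosure (genSubcat B) _ (genSub.ext₂ T hT h₁ h₃)

/-- The extension-closure of a class of objects `E`: the smallest class containing `E`
and `0` and such that for any distinguished triangle `X ⟶ Y ⟶ Z` with `X, Z` in the
class, `Y` is also in the class. -/
inductive extClosure (E : Set C) : C → Prop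
  | of (X : C) (hX : X ∈ E) : extClosure E X
  | zero (X : C) (hX : IsZero X) : extClosure E X
  | ext₂ (T : Triangle C) (hT : T ∈ distTriang C) (h₁ : extClosure E T.obj₁)
      (h₃ : extClosure E T.obj₃) : extClosure E T.obj₂

/-- `D_{[i,j]}`: the extension-closure of `∪_{i ≤ l ≤ j} D[l]`. -/
def shiftClosure (D : Set C) (i j : ℤ) : Set C :=
  extClosure {X | ∃ (Y : C) (l : ℤ), i ≤ l ∧ l ≤ j ∧ Y ∈ D ∧ X = Y⟦l⟧}

/-- `D_{≥ i} = ∪_{k ≥ i} D_{[i,k]}`. -/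
def shiftClosureGE (D : Set C) (i : ℤ) : Set C := {X | ∃ k, i ≤ k ∧ X ∈ shiftClosure D i k}

/-- `D_{≤ j} = ∪_{k ≤ j} D_{[k,j]}`. -/
def shiftClosureLE (D : Set C) (j : ℤ) : Set C := {X | ∃ k, k ≤ j ∧ X ∈ shiftClosure D k j}

/-- A set of objects `D` is weakly negative if `0 ∈ D` and `Hom(X, Y[i]) = 0`
for all `X, Y ∈ D` and all `i ≥ 2`. -/
def WeaklyNegative (D : Set C) : Prop :=
  (0 : C) ∈ D ∧ ∀ X ∈ D, ∀ Y ∈ D, ∀ i : ℤ, 2 ≤ i → ∀ f : X ⟶ (Y⟦i⟧), f = 0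

end TriangulatedPrelude

section WeightStructurePrelude

variable (C : Type u) [Category.{v} C] [HasZeroObject C] [HasShift C ℤ] [Preadditive C]
  [∀ n : ℤ, (shiftFunctor C n).Additive] [Pretriangulated C]

/-- A weight structure on a (pre)triangulated category `C` (homological convention):
two retract-closed classes of objects `LE = C_{w≤0}` and `GE = C_{w≥0}` such that
`C_{w≤0} ⊆ C_{w≤0}[1]`, `C_{w≥0}[1] ⊆ C_{w≥0}`, `Hom(C_{w≤0}, C_{w≥0}[1]) = 0`, and every
object `M` admits a weight decomposition `X ⟶ M ⟶ Y ⟶ X[1]` with `X ∈ C_{w≤0}`,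
`Y ∈ C_{w≥0}[1]`. -/
structure WeightStructure where
  /-- the class `C_{w≤0}` -/
  LE : Set C
  /-- the class `C_{w≥0}` -/
  GE : Set C
  retract_LE : ∀ ⦃X Y : C⦄, Y ∈ LE → ∀ (i : X ⟶ Y) (r : Y ⟶ X), i ≫ r = 𝟙 X → X ∈ LE
  retract_GE : ∀ ⦃X Y : C⦄, Y ∈ GE → ∀ (i : X ⟶ Y) (r : Y ⟶ X), i ≫ r = 𝟙 X → X ∈ GE
  shift_LE : ∀ X ∈ LE, X⟦(-1 : ℤ)⟧ ∈ LE
  shift_GE : ∀ X ∈ GE, X⟦(1 : ℤ)⟧ ∈ GE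
  orthogonality : ∀ X ∈ LE, ∀ Y ∈ GE, ∀ f : X ⟶ (Y⟦(1 : ℤ)⟧), f = 0
  decomposition : ∀ M : C, ∃ (X Y : C) (a : X ⟶ M) (b : M ⟶ Y) (c : Y ⟶ X⟦(1 : ℤ)⟧),
    (Triangle.mk a b c ∈ distTriang C) ∧ X ∈ LE ∧ Y⟦(-1 : ℤ)⟧ ∈ GE

variable {C}

/-- The class `C_{w=0} = C_{w≤0} ∩ C_{w≥0}` of objects of the heart. -/
def WeightStructure.heart (w : WeightStructure C) : Set C := w.LE ∩ w.GE

/-- The class `C_{[0,1]} = C_{w≥0} ∩ C_{w≤1}`. -/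
def WeightStructure.zeroOne (w : WeightStructure C) : Set C :=
  {X | X ∈ w.GE ∧ X⟦(-1 : ℤ)⟧ ∈ w.LE}

end WeightStructurePrelude

section Statement19

variable {C : Type u} [Category.{v} C] [HasZeroObject C] [HasShift C ℤ]
  [Preadditive C] [∀ n : ℤ, (shiftFunctor C n).Additive] [Pretriangulated C]
  [IsTriangulated C]

/-- The set of cones of the elements of a class of morphisms `S`. -/
def conesOf (S : MorphismProperty C) : Set C :=
  {Z | ∃ (X Y : C) (f : X ⟶ Y) (a : Y ⟶ Z) (b : Z ⟶ X⟦(1 : ℤ)⟧),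
    S f ∧ (Triangle.mk f a b ∈ distTriang C)}

/-- The heart `Hw` of a weight structure, as a full subcategory of `C`. -/
abbrev HeartCat (w : WeightStructure C) : Type u := ObjectProperty.FullSubcategory (· ∈ w.heart)

/-- `H`: the full subcategory of the Verdier quotient `C/𝔻` whose objects are those of
`C_{w=0}`. -/
abbrev HeartLoc (w : WeightStructure C) (S : MorphismProperty C) :=
  InducedCategory (genSubcat (conesOf S)).trW.Localization
    (fun X : HeartCat w => (genSubcat (conesOf S)).trW.Q.obj X.obj)

/-- The functor `u : Hw ⥤ H` induced by the localization functor. -/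
noncomputable def uHeart (w : WeightStructure C) (S : MorphismProperty C) :
    HeartCat w ⥤ HeartLoc w S where
  obj X := X
  map {X Y} f := InducedCategory.homMk ((genSubcat (conesOf S)).trW.Q.map f.hom)
  map_id X := InducedCategory.hom_ext ((genSubcat (conesOf S)).trW.Q.map_id X.obj)
  map_comp f g := InducedCategory.hom_ext ((genSubcat (conesOf S)).trW.Q.map_comp f.hom g.hom)

section AdditiveCocone

variable {H E A : Type*} [Category* H] [Category* E] [Category* A] [Preadditive E] [Preadditive A]

/-- An additive cocone with vertex `Z` on the values of `F` over the comma category `L / e`: a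
morphism of additive presheaves `Hom(L -, e) ⟶ Hom(F -, Z)` on `H`. -/
@[ext]
structure AdditiveCocone (L : H ⥤ E) (F : H ⥤ A) (e : E) (Z : A) where
  /-- the leg of the cocone at a morphism `L.obj W ⟶ e` -/
  app (W : H) : (L.obj W ⟶ e) →+ (F.obj W ⟶ Z)
  naturality {V W : H} (f : V ⟶ W) (x : L.obj W ⟶ e) :
    app V (L.map f ≫ x) = F.map f ≫ app W x

namespace AdditiveCocone

variable {L : H ⥤ E} {F : H ⥤ A} {e e' e'' : E} {Z Z' : A}

lemma congr_app_apply {α β : AdditiveCocone L F e Z} (h : α = β) {W : H} (x : L.obj W ⟶ e) :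
    α.app W x = β.app W x := by
  rw [h]

instance : Add (AdditiveCocone L F e Z) where
  add α β :=
    { app W := α.app W + β.app W
      naturality f x := by simp [α.naturality, β.naturality] }

@[simp]
lemma add_app (α β : AdditiveCocone L F e Z) (W : H) : (α + β).app W = α.app W + β.app W :=
  rfl

/-- The cocone induced over `L / e` by a morphism `e ⟶ e'` and a cocone over `L / e'`. -/
def precomp (α : AdditiveCocone L F e' Z) (t : e ⟶ e') : AdditiveCocone L F e Z where
  app W := (α.app W).comp (Preadditive.rightComp (L.obj W) t)
  naturality f x := by simp [Preadditive.rightComp, α.naturality]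

@[simp]
lemma precomp_app_apply (α : AdditiveCocone L F e' Z) (t : e ⟶ e') {W : H} (x : L.obj W ⟶ e) :
    (α.precomp t).app W x = α.app W (x ≫ t) :=
  rfl

lemma app_eq_zero_of_iso {α : AdditiveCocone L F e Z} (i : e' ≅ e) {W : H} {x : L.obj W ⟶ e}
    (h : (α.precomp i.hom).app W (x ≫ i.inv) = 0) : α.app W x = 0 := by
  simpa using h

lemma app_comp_eq_of_precomp_eq {α β : AdditiveCocone L F e' Z} {t : e ⟶ e'}
    (h : α.precomp t = β.precomp t) {W : H} (x : L.obj W ⟶ e) :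
    α.app W (x ≫ t) = β.app W (x ≫ t) :=
  congr_app_apply h x

/-- The cocone obtained by composing all legs with a morphism `Z ⟶ Z'`. -/
def postcomp (α : AdditiveCocone L F e Z) (z : Z ⟶ Z') : AdditiveCocone L F e Z' where
  app W := (Preadditive.rightComp (F.obj W) z).comp (α.app W)
  naturality f x := by simp [Preadditive.rightComp, α.naturality]

@[simp]
lemma postcomp_app_apply (α : AdditiveCocone L F e Z) (z : Z ⟶ Z') {W : H} (x : L.obj W ⟶ e) :
    (α.postcomp z).app W x = α.app W x ≫ z :=
  rfl

lemma precomp_precomp (α : AdditiveCocone L F e'' Z) (t' : e' ⟶ e'') (t : e ⟶ e') :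
    (α.precomp t').precomp t = α.precomp (t ≫ t') := by
  ext W x
  simp

lemma precomp_id (α : AdditiveCocone L F e Z) : α.precomp (𝟙 e) = α := by
  ext W x
  simp

lemma app_eq_comp_app_id {V W : H} (α : AdditiveCocone L F (L.obj W) Z) (f : V ⟶ W) :
    α.app V (L.map f) = F.map f ≫ α.app W (𝟙 _) := by
  simpa using α.naturality f (𝟙 _)

lemma precomp_injective {t : e ⟶ e'} (lift : ∀ W (x : L.obj W ⟶ e'), ∃ y, y ≫ t = x) :
    Function.Injective fun α : AdditiveCocone L F e' Z ↦ α.precomp t := by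
  intro α β h
  ext W x
  obtain ⟨y, rfl⟩ := lift W x
  exact app_comp_eq_of_precomp_eq h y

lemma exists_precomp_eq {t : e ⟶ e'} (lift : ∀ W (x : L.obj W ⟶ e'), ∃ y, y ≫ t = x)
    (α : AdditiveCocone L F e Z) (hα : ∀ W (y : L.obj W ⟶ e), y ≫ t = 0 → α.app W y = 0) :
    ∃ α' : AdditiveCocone L F e' Z, α'.precomp t = α := by
  choose r hr using lift
  have hr' (W : H) : Function.RightInverse (r W) (Preadditive.rightComp (L.obj W) t) := hr W
  let app (W : H) : (L.obj W ⟶ e') →+ (F.obj W ⟶ Z) :=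
    (Preadditive.rightComp (L.obj W) t).liftOfRightInverse (r W) (hr' W) ⟨α.app W, hα W⟩
  have app_comp (W : H) (y : L.obj W ⟶ e) : app W (y ≫ t) = α.app W y :=
    AddMonoidHom.liftOfRightInverse_comp_apply _ _ (hr' W) ⟨α.app W, hα W⟩ y
  refine ⟨⟨app, fun {V W} f x ↦ ?_⟩, by ext W y; exact app_comp W y⟩
  rw [← hr W x, ← Category.assoc, app_comp, app_comp, α.naturality]

variable [Preadditive H]

/-- The Yoneda lemma for additive cocones: over a comma category `ι / ι.obj B`, with `ι` fully
faithful, a cocone amounts to its leg at the identity. -/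
@[simps apply]
noncomputable def idLegEquiv (ι : H ⥤ E) [ι.Full] [ι.Faithful] [ι.Additive] (F : H ⥤ A)
    [F.Additive] (B : H) (Z : A) : AdditiveCocone ι F (ι.obj B) Z ≃ (F.obj B ⟶ Z) where
  toFun α := α.app B (𝟙 _)
  invFun p :=
    { app W := AddMonoidHom.mk' (fun x ↦ F.map (ι.preimage x) ≫ p) fun x y ↦ by
        rw [show ι.preimage (x + y) = ι.preimage x + ι.preimage y from
          ι.map_injective (by simp), F.map_add, Preadditive.add_comp]
      naturality f x := by simp [ι.preimage_comp] }
  left_inv α := by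
    ext W x
    simp [← α.app_eq_comp_app_id]
  right_inv p := by simp

lemma idLegEquiv_symm_app_map (ι : H ⥤ E) [ι.Full] [ι.Faithful] [ι.Additive] {F : H ⥤ A}
    [F.Additive] {B W : H} {Z : A} (p : F.obj B ⟶ Z) (f : W ⟶ B) :
    ((idLegEquiv ι F B Z).symm p).app W (ι.map f) = F.map f ≫ p := by
  rw [app_eq_comp_app_id, ← idLegEquiv_apply, Equiv.apply_symm_apply]

end AdditiveCocone

open AdditiveCocone

/-- Every additive cocone over `L / e` extends uniquely along `t : e ⟶ e'` to one over `L / e'`. -/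
def ExtendsUniquely (L : H ⥤ E) (F : H ⥤ A) {e e' : E} (t : e ⟶ e') : Prop :=
  ∀ Z : A, Function.Bijective fun α : AdditiveCocone L F e' Z ↦ α.precomp t

namespace ExtendsUniquely

variable {L : H ⥤ E} {F : H ⥤ A} {e e' e'' : E}

lemma comp {t : e ⟶ e'} {t' : e' ⟶ e''} (ht : ExtendsUniquely L F t)
    (ht' : ExtendsUniquely L F t') : ExtendsUniquely L F (t ≫ t') := by
  intro Z
  simpa [Function.comp_def, precomp_precomp] using (ht Z).comp (ht' Z)

variable (L F) in
lemma of_isIso (t : e ⟶ e') [IsIso t] : ExtendsUniquely L F t := fun Z ↦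
  Function.bijective_iff_has_inverse.2 ⟨fun α ↦ α.precomp (inv t),
    fun α ↦ by simp [precomp_precomp, precomp_id], fun α ↦ by simp [precomp_precomp, precomp_id]⟩

lemma of_lift_of_forall_app_eq_zero {t : e ⟶ e'}
    (lift : ∀ W (x : L.obj W ⟶ e'), ∃ y, y ≫ t = x)
    (kills : ∀ Z (α : AdditiveCocone L F e Z) W (y : L.obj W ⟶ e), y ≫ t = 0 → α.app W y = 0) :
    ExtendsUniquely L F t := fun Z ↦
  ⟨precomp_injective lift, fun α ↦ exists_precomp_eq lift α (kills Z α)⟩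

lemma precomp_injective_of_forall_exists_eq_add [Preadditive H] {ι : H ⥤ E} [ι.Full] [ι.Faithful]
    [ι.Additive] [F.Additive] {A₀ B₀ : H} (s : A₀ ⟶ B₀) [Epi (F.map s)] {a : ι.obj A₀ ⟶ e}
    {b : ι.obj B₀ ⟶ e'} {t : e ⟶ e'} (comm : ι.map s ≫ b = a ≫ t)
    (lift : ∀ W (x : ι.obj W ⟶ e'), ∃ x₁ x₂, x = x₁ ≫ b + x₂ ≫ t) (Z : A) :
    Function.Injective fun α : AdditiveCocone ι F e' Z ↦ α.precomp t := by
  intro α β h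
  have h_b : α.precomp b = β.precomp b := by
    apply (idLegEquiv ι F B₀ Z).injective
    rw [← cancel_epi (F.map s), idLegEquiv_apply, idLegEquiv_apply, ← app_eq_comp_app_id,
      ← app_eq_comp_app_id, precomp_app_apply, precomp_app_apply, comm]
    exact app_comp_eq_of_precomp_eq h a
  ext W x
  obtain ⟨x₁, x₂, rfl⟩ := lift W x
  rw [map_add, map_add, app_comp_eq_of_precomp_eq h_b, app_comp_eq_of_precomp_eq h]

/-- The hypotheses `lift` and `ker` say that the square formed by `ι.map s`, `a`, `b` and `t` is
a weak pushout as far as morphisms from values of `ι` can see. A cocone is extended along `t` by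
using on `b` the inverse of `F.map s`. -/
lemma of_weakPushout [Preadditive H] [HasBinaryBiproducts E] {ι : H ⥤ E} [ι.Full] [ι.Faithful]
    [ι.Additive] [F.Additive] {A₀ B₀ : H} (s : A₀ ⟶ B₀) [IsIso (F.map s)] {a : ι.obj A₀ ⟶ e}
    {b : ι.obj B₀ ⟶ e'} {t : e ⟶ e'} (comm : ι.map s ≫ b = a ≫ t)
    (lift : ∀ W (x : ι.obj W ⟶ e'), ∃ x₁ x₂, x = x₁ ≫ b + x₂ ≫ t)
    (ker : ∀ W (x₁ : ι.obj W ⟶ ι.obj B₀) (x₂ : ι.obj W ⟶ e), x₁ ≫ b + x₂ ≫ t = 0 →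
      ∃ y, y ≫ ι.map s = x₁ ∧ y ≫ a = -x₂) :
    ExtendsUniquely ι F t := by
  refine fun Z ↦ ⟨precomp_injective_of_forall_exists_eq_add s comm lift Z, fun α ↦ ?_⟩
  have lift' (W : H) (x : ι.obj W ⟶ e') : ∃ y, y ≫ biprod.desc b t = x := by
    obtain ⟨x₁, x₂, rfl⟩ := lift W x
    exact ⟨biprod.lift x₁ x₂, by simp⟩
  let β : AdditiveCocone ι F (ι.obj B₀ ⊞ e) Z :=
    ((idLegEquiv ι F B₀ Z).symm (inv (F.map s) ≫ α.app A₀ a)).precomp biprod.fst +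
      α.precomp biprod.snd
  have hβ (W : H) (y : ι.obj W ⟶ ι.obj B₀ ⊞ e) (hy : y ≫ biprod.desc b t = 0) :
      β.app W y = 0 := by
    obtain ⟨u, hu_s, hu_a⟩ := ker W (y ≫ biprod.fst) (y ≫ biprod.snd) (by
      simpa [biprod.desc_eq] using hy)
    obtain ⟨u, rfl⟩ := ι.map_surjective u
    have hα : F.map u ≫ α.app A₀ a = -α.app W (y ≫ biprod.snd) := by
      rw [← α.naturality, hu_a, map_neg]
    rw [add_app, AddMonoidHom.add_apply, precomp_app_apply, precomp_app_apply, ← hu_s,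
      ← ι.map_comp, idLegEquiv_symm_app_map, F.map_comp, Category.assoc, IsIso.hom_inv_id_assoc,
      hα, neg_add_cancel]
  obtain ⟨α', hα'⟩ := exists_precomp_eq lift' β hβ
  refine ⟨α', ?_⟩
  calc α'.precomp t = β.precomp biprod.inr := by rw [← hα', precomp_precomp, biprod.inr_desc]
    _ = α := by ext W x; simp [β]

end ExtendsUniquely

end AdditiveCocone

section UniversalProperty

variable {H D E A : Type*} [Category* H] [Category* D] [Category* E] [Category* A]
  [Preadditive D] [Preadditive E] [Preadditive A]

namespace AdditiveCocone

/-- A transformation `F ⟶ u ⋙ G` extends the functoriality of `F` to morphisms between values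
of `u`. -/
def ofNatTrans {u : H ⥤ D} {F : H ⥤ A} {G : D ⥤ A} [G.Additive] (η : F ⟶ u ⋙ G) (d : D) :
    AdditiveCocone u F d (G.obj d) where
  app W := AddMonoidHom.mk' (fun φ ↦ η.app W ≫ G.map φ) fun φ ψ ↦ by simp
  naturality f φ := by simp

@[simp]
lemma ofNatTrans_app_apply {u : H ⥤ D} {F : H ⥤ A} {G : D ⥤ A} [G.Additive] (η : F ⟶ u ⋙ G)
    {d : D} {W : H} (φ : u.obj W ⟶ d) : (ofNatTrans η d).app W φ = η.app W ≫ G.map φ :=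
  rfl

/-- The restriction of a cocone over `(L ⋙ Q) / Q.obj e` along the functor from `L / e`. -/
@[simps]
def restrict {L : H ⥤ D} {Q : D ⥤ E} [Q.Additive] {F : H ⥤ A} {e : D} {Z : A}
    (γ : AdditiveCocone (L ⋙ Q) F (Q.obj e) Z) : AdditiveCocone L F e Z where
  app W := (γ.app W).comp Q.mapAddHom
  naturality f x := by simpa using γ.naturality f (Q.map x)

lemma restrict_bijective_of_full_of_faithful (u : H ⥤ D) (j : D ⥤ E) [j.Additive] [j.Full]
    [j.Faithful] (F : H ⥤ A) (d : D) (Z : A) :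
    Function.Bijective (restrict : AdditiveCocone (u ⋙ j) F (j.obj d) Z → _) := by
  constructor
  · intro α β h
    ext W φ
    obtain ⟨φ, rfl⟩ := j.map_surjective φ
    exact congr_app_apply h φ
  · intro α
    refine ⟨⟨fun W ↦ AddMonoidHom.mk' (fun φ ↦ α.app W (j.preimage φ)) fun φ ψ ↦ ?_,
      fun f φ ↦ ?_⟩, ?_⟩
    · rw [← map_add]
      congr 1
      exact j.map_injective (by simp)
    · simp [j.preimage_comp, α.naturality]
    · ext W φ
      simp

end AdditiveCocone

open AdditiveCocone

lemma naturality_of_eval_injective {u : H ⥤ D} {G₁ G₂ : D ⥤ A} [G₁.Additive] [G₂.Additive]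
    (eval : ∀ (Y : H) (Z : A),
      Function.Injective fun γ : AdditiveCocone u (u ⋙ G₁) (u.obj Y) Z ↦ γ.app Y (𝟙 _))
    (η : u ⋙ G₁ ⟶ u ⋙ G₂) {X Y : H} (φ : u.obj X ⟶ u.obj Y) :
    G₁.map φ ≫ η.app Y = η.app X ≫ G₂.map φ := by
  have : (ofNatTrans (𝟙 (u ⋙ G₁)) (u.obj Y)).postcomp (η.app Y) = ofNatTrans η (u.obj Y) :=
    eval Y _ (by simp)
  simpa using congr_app_apply this φ

lemma eq_of_comp_eq_comp_of_eval_injective {u : H ⥤ D} (hu : Function.Surjective u.obj)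
    {G₁ G₂ : D ⥤ A} [G₁.Additive] [G₂.Additive]
    (eval : ∀ (Y : H) (Z : A),
      Function.Injective fun γ : AdditiveCocone u (u ⋙ G₁) (u.obj Y) Z ↦ γ.app Y (𝟙 _))
    (h : u ⋙ G₁ = u ⋙ G₂) : G₁ = G₂ := by
  have h_obj (d : D) : G₁.obj d = G₂.obj d := by
    obtain ⟨X, rfl⟩ := hu d
    exact CategoryTheory.Functor.congr_obj h X
  refine CategoryTheory.Functor.ext h_obj fun c d φ ↦ ?_
  obtain ⟨X, rfl⟩ := hu c
  obtain ⟨Y, rfl⟩ := hu d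
  have := naturality_of_eval_injective eval (eqToHom h) φ
  rw [eqToHom_app, eqToHom_app] at this
  simp [← reassoc_of% this]

end UniversalProperty

section InducedCategory

variable {H E A : Type*} [Category* H] [Category* E] [Category* A]

/-- A functor `L : H ⥤ E`, viewed as a functor to the category with the objects of `H` and the
morphisms of `E` between their images; it is the identity on objects. -/
@[simps]
def toInducedCategory (L : H ⥤ E) : H ⥤ InducedCategory E L.obj where
  obj X := X
  map f := InducedCategory.homMk (L.map f)

lemma isIso_toInducedCategory_map (L : H ⥤ E) {X Y : H} (s : X ⟶ Y) [IsIso (L.map s)] :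
    IsIso ((toInducedCategory L).map s) :=
  have : IsIso ((inducedFunctor L.obj).map ((toInducedCategory L).map s)) :=
    inferInstanceAs (IsIso (L.map s))
  isIso_of_reflects_iso _ (inducedFunctor L.obj)

variable [Preadditive E] [Preadditive A] {L : H ⥤ E} {F : H ⥤ A}

open AdditiveCocone

lemma exists_additive_factorization_toInducedCategory
    (eval : ∀ (Y : H) (Z : A),
      Function.Bijective fun γ : AdditiveCocone L F (L.obj Y) Z ↦ γ.app Y (𝟙 _)) :
    ∃ G : InducedCategory E L.obj ⥤ A, G.Additive ∧ toInducedCategory L ⋙ G = F := by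
  choose γ hγ using fun Y ↦ (eval Y (F.obj Y)).2 (𝟙 _)
  replace hγ (Y : H) : (γ Y).app Y (𝟙 _) = 𝟙 (F.obj Y) := hγ Y
  have γ_comp {X Y Z : H} (φ : L.obj X ⟶ L.obj Y) (ψ : L.obj Y ⟶ L.obj Z) :
      (γ Z).app X (φ ≫ ψ) = (γ Y).app X φ ≫ (γ Z).app Y ψ := by
    have : (γ Z).precomp ψ = (γ Y).postcomp ((γ Z).app Y ψ) := (eval Y _).1 (by simp [hγ])
    exact congr_app_apply this φ
  have γ_map {X Y : H} (f : X ⟶ Y) : (γ Y).app X (L.map f) = F.map f := by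
    rw [app_eq_comp_app_id, hγ, Category.comp_id]
  let G : InducedCategory E L.obj ⥤ A :=
    { obj := F.obj
      map {_ Y} φ := (γ Y).app _ φ.hom
      map_id := hγ
      map_comp φ ψ := γ_comp φ.hom ψ.hom }
  exact ⟨G, ⟨fun {_ Y φ ψ} ↦ ((γ Y).app _).map_add φ.hom ψ.hom⟩,
    CategoryTheory.Functor.ext (fun _ ↦ rfl) fun X Y f ↦ (γ_map f).trans
      ((Category.id_comp _).trans (Category.comp_id _)).symm⟩

lemma existsUnique_additive_factorization_toInducedCategory
    (eval : ∀ (Y : H) (Z : A),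
      Function.Bijective fun γ : AdditiveCocone L F (L.obj Y) Z ↦ γ.app Y (𝟙 _)) :
    ∃! G : InducedCategory E L.obj ⥤ A, G.Additive ∧ toInducedCategory L ⋙ G = F := by
  obtain ⟨G, hG, hGF⟩ := exists_additive_factorization_toInducedCategory eval
  refine ⟨G, ⟨hG, hGF⟩, fun G' ⟨hG', hGF'⟩ ↦ ?_⟩
  subst hGF
  refine (eq_of_comp_eq_comp_of_eval_injective (u := toInducedCategory L)
    Function.surjective_id (fun Y Z ↦ ?_) hGF'.symm).symm
  have := restrict_bijective_of_full_of_faithful (toInducedCategory L) (inducedFunctor L.obj)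
    (toInducedCategory L ⋙ G) Y Z
  refine Function.Injective.of_comp_right (eval Y Z).1 this.2

end InducedCategory

section Localization

lemma exists_refinement_of_fractions_eq {C E : Type*} [Category* C] [Category* E] {Q : C ⥤ E}
    {W : MorphismProperty C} [W.HasLeftCalculusOfFractions] [Q.IsLocalization W]
    {X Y Y₁ Y₂ : C}
    {φ : Q.obj X ⟶ Q.obj Y} {t₁ : Y ⟶ Y₁} {t₂ : Y ⟶ Y₂} {f₁ : X ⟶ Y₁} {f₂ : X ⟶ Y₂}
    (ht₁ : W t₁) (ht₂ : W t₂) (h₁ : φ ≫ Q.map t₁ = Q.map f₁) (h₂ : φ ≫ Q.map t₂ = Q.map f₂) :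
    ∃ (Y' : C) (r₁ : Y₁ ⟶ Y') (r₂ : Y₂ ⟶ Y'),
      W (t₁ ≫ r₁) ∧ t₁ ≫ r₁ = t₂ ≫ r₂ ∧ f₁ ≫ r₁ = f₂ ≫ r₂ := by
  have eq_map {Y' : C} {t : Y ⟶ Y'} {f : X ⟶ Y'} (ht : W t) (h : φ ≫ Q.map t = Q.map f) :
      (MorphismProperty.LeftFraction.mk f t ht).map Q (Localization.inverts Q W) = φ := by
    have := Localization.inverts Q W t ht
    rw [← cancel_mono (Q.map t), h]
    exact MorphismProperty.LeftFraction.map_comp_map_s _ _ _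
  obtain ⟨Y', r₁, r₂, h_s, h_f, hW⟩ := (MorphismProperty.LeftFraction.map_eq_iff Q W _ _).1
    ((eq_map ht₁ h₁).trans (eq_map ht₂ h₂).symm)
  exact ⟨Y', r₁, r₂, hW, h_s, h_f⟩

variable {H C E A : Type*} [Category* H] [Category* C] [Category* E] [Category* A]
  [Preadditive C] [Preadditive A] {ι : H ⥤ C} {F : H ⥤ A} {Y : C} {Z : A}
  {W : MorphismProperty C} {Q : C ⥤ E}

open AdditiveCocone

variable (W Q) in
/-- `v` is the value at `φ : Q.obj (ι.obj V) ⟶ Q.obj Y` obtained from a cocone `β` over `ι / Y` by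
writing `φ` as a left fraction with numerator `f` and denominator `t` in `W`, and evaluating at `f`
the extension of `β` along `t`. -/
def IsFractionValue (β : AdditiveCocone ι F Y Z) {V : H} (φ : Q.obj (ι.obj V) ⟶ Q.obj Y)
    (v : F.obj V ⟶ Z) : Prop :=
  ∃ (Y' : C) (t : Y ⟶ Y') (f : ι.obj V ⟶ Y') (α : AdditiveCocone ι F Y' Z),
    W t ∧ ExtendsUniquely ι F t ∧ φ ≫ Q.map t = Q.map f ∧ α.precomp t = β ∧ α.app V f = v

variable (ι F W Y) in
/-- The denominators `t : Y ⟶ Y'` in `W` along which additive cocones over `ι / Y` extend uniquely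
are cofinal among all denominators. -/
def HasEnoughExtensions : Prop :=
  ∀ ⦃Y' : C⦄ (t : Y ⟶ Y'), W t →
    ∃ (Y'' : C) (s : Y' ⟶ Y''), W (t ≫ s) ∧ ExtendsUniquely ι F (t ≫ s)

namespace HasEnoughExtensions

variable [W.HasLeftCalculusOfFractions] [Q.IsLocalization W]

lemma exists_common_denominator (h : HasEnoughExtensions ι F Y W)
    {X : C} (φ ψ : Q.obj X ⟶ Q.obj Y) :
    ∃ (Y' : C) (t : Y ⟶ Y') (f g : X ⟶ Y'), W t ∧ ExtendsUniquely ι F t ∧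
      φ ≫ Q.map t = Q.map f ∧ ψ ≫ Q.map t = Q.map g := by
  obtain ⟨z, rfl, rfl⟩ := Localization.exists_leftFraction₂ Q W φ ψ
  obtain ⟨Y', s, hs, hs'⟩ := h z.s z.hs
  refine ⟨Y', z.s ≫ s, z.f ≫ s, z.f' ≫ s, hs, hs', ?_, ?_⟩
  · rw [Q.map_comp, Q.map_comp]
    exact z.fst.map_comp_map_s_assoc Q (Localization.inverts Q W) _
  · rw [Q.map_comp, Q.map_comp]
    exact z.snd.map_comp_map_s_assoc Q (Localization.inverts Q W) _

lemma isFractionValue_unique (h : HasEnoughExtensions ι F Y W)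
    {β : AdditiveCocone ι F Y Z} {V : H} {φ : Q.obj (ι.obj V) ⟶ Q.obj Y} {v₁ v₂ : F.obj V ⟶ Z}
    (h₁ : IsFractionValue W Q β φ v₁) (h₂ : IsFractionValue W Q β φ v₂) : v₁ = v₂ := by
  obtain ⟨Y₁, t₁, f₁, α₁, ht₁, ht₁', hφ₁, hα₁, rfl⟩ := h₁
  obtain ⟨Y₂, t₂, f₂, α₂, ht₂, ht₂', hφ₂, hα₂, rfl⟩ := h₂
  obtain ⟨Y', r₁, r₂, hr, h_t, h_f⟩ := exists_refinement_of_fractions_eq ht₁ ht₂ hφ₁ hφ₂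
  obtain ⟨Y'', s, -, hs⟩ := h _ hr
  obtain ⟨α, hα⟩ : ∃ α : AdditiveCocone ι F Y'' Z, α.precomp ((t₁ ≫ r₁) ≫ s) = β := (hs Z).2 β
  have hr₁ : α.precomp (r₁ ≫ s) = α₁ := (ht₁' Z).1 (by
    simp only [precomp_precomp, hα₁, ← hα, Category.assoc])
  have hr₂ : α.precomp (r₂ ≫ s) = α₂ := (ht₂' Z).1 (by
    simp only [precomp_precomp, hα₂, ← hα, h_t, Category.assoc])
  rw [← hr₁, ← hr₂, precomp_app_apply, precomp_app_apply, reassoc_of% h_f]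

variable [Preadditive E] [Q.Additive]

lemma restrict_injective (h : HasEnoughExtensions ι F Y W) :
    Function.Injective (restrict : AdditiveCocone (ι ⋙ Q) F (Q.obj Y) Z → _) := by
  intro γ γ' hγ
  ext V φ
  obtain ⟨Y', t, f, -, ht, ht', hφ, -⟩ := h.exists_common_denominator (Q := Q) φ φ
  have := Localization.inverts Q W t ht
  have h_ext : (γ.precomp (inv (Q.map t))).restrict = (γ'.precomp (inv (Q.map t))).restrict := by
    apply (ht' Z).1
    ext V x
    simpa using congr_app_apply hγ x
  simpa [← hφ] using congr_app_apply h_ext f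

lemma restrict_surjective (h : HasEnoughExtensions ι F Y W) :
    Function.Surjective (restrict : AdditiveCocone (ι ⋙ Q) F (Q.obj Y) Z → _) := by
  intro β
  have exists_value (V : H) (φ : Q.obj (ι.obj V) ⟶ Q.obj Y) : ∃ v, IsFractionValue W Q β φ v := by
    obtain ⟨Y', t, f, -, ht, ht', hφ, -⟩ := h.exists_common_denominator φ φ
    obtain ⟨α, hα⟩ := (ht' Z).2 β
    exact ⟨_, Y', t, f, α, ht, ht', hφ, hα, rfl⟩
  choose value h_value using exists_value
  have value_eq {V : H} {φ : Q.obj (ι.obj V) ⟶ Q.obj Y} {v} (hv : IsFractionValue W Q β φ v) :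
      value V φ = v := h.isFractionValue_unique (h_value V φ) hv
  have value_add (V : H) (φ ψ : Q.obj (ι.obj V) ⟶ Q.obj Y) :
      value V (φ + ψ) = value V φ + value V ψ := by
    obtain ⟨Y', t, f, g, ht, ht', hφ, hψ⟩ := h.exists_common_denominator φ ψ
    obtain ⟨α, hα⟩ := (ht' Z).2 β
    rw [value_eq ⟨Y', t, f, α, ht, ht', hφ, hα, rfl⟩, value_eq ⟨Y', t, g, α, ht, ht', hψ, hα, rfl⟩,
      ← map_add]
    exact value_eq ⟨Y', t, f + g, α, ht, ht', by simp [hφ, hψ], hα, rfl⟩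
  have value_naturality {V' V : H} (f : V' ⟶ V) (φ : Q.obj (ι.obj V) ⟶ Q.obj Y) :
      value V' (Q.map (ι.map f) ≫ φ) = F.map f ≫ value V φ := by
    obtain ⟨Y', t, g, α, ht, ht', hφ, hα, hv⟩ := h_value V φ
    rw [← hv, ← α.naturality]
    exact value_eq ⟨Y', t, ι.map f ≫ g, α, ht, ht', by simp [hφ], hα, rfl⟩
  refine ⟨⟨fun V ↦ AddMonoidHom.mk' (value V) (value_add V), value_naturality⟩, ?_⟩
  ext V x
  obtain ⟨Y', t, -, -, ht, ht', -⟩ := h.exists_common_denominator (Q := Q) (𝟙 _) (𝟙 _)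
  obtain ⟨α, rfl⟩ := (ht' Z).2 β
  exact value_eq ⟨Y', t, x ≫ t, α, ht, ht', (Q.map_comp x t).symm, rfl, rfl⟩

lemma eval_bijective [Preadditive H] [ι.Full] [ι.Faithful] [ι.Additive] [F.Additive] {B : H}
    (h : HasEnoughExtensions ι F (ι.obj B) W) :
    Function.Bijective fun γ : AdditiveCocone (ι ⋙ Q) F ((ι ⋙ Q).obj B) Z ↦ γ.app B (𝟙 _) := by
  have eval_eq : (fun γ : AdditiveCocone (ι ⋙ Q) F ((ι ⋙ Q).obj B) Z ↦ γ.app B (𝟙 _)) =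
      idLegEquiv ι F B Z ∘ restrict :=
    funext fun γ ↦ congr_arg (γ.app B) (Q.map_id _).symm
  rw [eval_eq]
  exact (idLegEquiv ι F B Z).bijective.comp
    ⟨h.restrict_injective (Q := Q), h.restrict_surjective⟩

end HasEnoughExtensions

end Localization

section ShiftExtClosure

variable {𝒞 : Type*} [Category* 𝒞] [HasZeroObject 𝒞] [HasShift 𝒞 ℤ] [Preadditive 𝒞]
  [∀ n : ℤ, (shiftFunctor 𝒞 n).Additive] [Pretriangulated 𝒞]

instance (E : Set 𝒞) : ObjectProperty.ContainsZero (extClosure E) :=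
  ⟨0, isZero_zero 𝒞, extClosure.zero _ (isZero_zero 𝒞)⟩

instance (E : Set 𝒞) : ObjectProperty.IsClosedUnderIsomorphisms (extClosure E) where
  of_iso {X Y} e hX := by
    have hT : Triangle.mk e.hom (0 : Y ⟶ 0) 0 ∈ distTriang 𝒞 :=
      isomorphic_distinguished _ (contractible_distinguished X) _
        (Triangle.isoMk _ _ (Iso.refl _) e.symm (Iso.refl _)
          (e.hom_inv_id.trans (Category.id_comp _).symm) (zero_comp.trans comp_zero.symm)
          (zero_comp.trans comp_zero.symm))
    exact extClosure.ext₂ _ hT hX (extClosure.zero _ (isZero_zero 𝒞))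

instance (E : Set 𝒞) : ObjectProperty.IsTriangulatedClosed₂ (extClosure E) :=
  .mk' fun T hT ↦ extClosure.ext₂ T hT

lemma extClosure_le {E : Set 𝒞} {P : ObjectProperty 𝒞} [P.ContainsZero]
    [P.IsClosedUnderIsomorphisms] [P.IsTriangulatedClosed₂] (h : ∀ X ∈ E, P X) :
    extClosure E ≤ P := by
  intro X hX
  induction hX with
  | of X hX => exact h X hX
  | zero X hX => exact P.prop_of_isZero hX
  | ext₂ T hT _ _ h₁ h₃ => exact P.ext_of_isTriangulatedClosed₂ T hT h₁ h₃

lemma eq_zero_of_extClosure {E E' : Set 𝒞} (h : ∀ X ∈ E, ∀ Y ∈ E', ∀ f : X ⟶ Y, f = 0) {X Y : 𝒞}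
    (hX : extClosure E X) (hY : extClosure E' Y) (f : X ⟶ Y) : f = 0 := by
  have left (Y : 𝒞) (hY : Y ∈ E') : extClosure E ≤ (ObjectProperty.leftOrthogonal (· = Y)) :=
    extClosure_le fun X hX ↦ by rintro _ f rfl; exact h X hX _ hY f
  have right : extClosure E' ≤ (ObjectProperty.rightOrthogonal (extClosure E)) :=
    extClosure_le fun Y hY X f hX ↦ left Y hY X hX f rfl
  exact right Y hY f hX

/-- The extension-closure `D_I` of `⋃_{l ∈ I} D[l]`, for a set `I` of integers. It specializes to
`D_{[i,j]}`, `D_{≥ i}` and `D_{≤ j}`. -/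
def shiftExtClosure (D : Set 𝒞) (I : Set ℤ) : ObjectProperty 𝒞 :=
  extClosure {X | ∃ (Y : 𝒞) (l : ℤ), l ∈ I ∧ Y ∈ D ∧ X = Y⟦l⟧}

variable {D N : Set 𝒞} {I J : Set ℤ}

instance : (shiftExtClosure D I).ContainsZero :=
  inferInstanceAs (ObjectProperty.ContainsZero (extClosure _))

instance : (shiftExtClosure D I).IsClosedUnderIsomorphisms :=
  inferInstanceAs (ObjectProperty.IsClosedUnderIsomorphisms (extClosure _))

instance : (shiftExtClosure D I).IsTriangulatedClosed₂ :=
  inferInstanceAs (ObjectProperty.IsTriangulatedClosed₂ (extClosure _))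

lemma shiftExtClosure_of_mem_shift {X : 𝒞} (hX : X ∈ D) {l : ℤ} (hl : l ∈ I) :
    shiftExtClosure D I (X⟦l⟧) :=
  extClosure.of _ ⟨X, l, hl, hX, rfl⟩

lemma shiftExtClosure_of_mem {X : 𝒞} (hX : X ∈ D) (hI : 0 ∈ I) : shiftExtClosure D I X :=
  (shiftExtClosure D I).prop_of_iso ((shiftFunctorZero 𝒞 ℤ).app X)
    (shiftExtClosure_of_mem_shift hX hI)

lemma shiftExtClosure_le {P : ObjectProperty 𝒞} [P.ContainsZero] [P.IsClosedUnderIsomorphisms]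
    [P.IsTriangulatedClosed₂] (h : ∀ X ∈ D, ∀ l ∈ I, P (X⟦l⟧)) : shiftExtClosure D I ≤ P :=
  extClosure_le (by rintro _ ⟨Y, l, hl, hY, rfl⟩; exact h Y hY l hl)

lemma shiftExtClosure_shift {X : 𝒞} (hX : shiftExtClosure D I X) (n : ℤ)
    (hIJ : ∀ l ∈ I, l + n ∈ J) : shiftExtClosure D J (X⟦n⟧) := by
  induction hX with
  | of X hX =>
    obtain ⟨Y, l, hl, hY, rfl⟩ := hX
    exact (shiftExtClosure D J).prop_of_iso ((shiftFunctorAdd 𝒞 l n).app Y)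
      (shiftExtClosure_of_mem_shift hY (hIJ l hl))
  | zero X hX => exact (shiftExtClosure D J).prop_of_isZero ((shiftFunctor 𝒞 n).map_isZero hX)
  | ext₂ T hT _ _ h₁ h₃ =>
    exact (shiftExtClosure D J).ext_of_isTriangulatedClosed₂ _ (T.shift_distinguished hT n) h₁ h₃

lemma shiftExtClosure_conesOf_le {S : MorphismProperty 𝒞}
    (hS : ∀ ⦃X Y : 𝒞⦄ (f : X ⟶ Y), S f → X ∈ N ∧ Y ∈ N) (hIJ : ∀ l ∈ I, l ∈ J ∧ 1 + l ∈ J) :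
    shiftExtClosure (conesOf S) I ≤ shiftExtClosure N J := by
  refine shiftExtClosure_le ?_
  rintro K ⟨X, Y, f, a, b, hf, hT⟩ l hl
  refine (shiftExtClosure N J).ext_of_isTriangulatedClosed₂ _
    (Triangle.shift_distinguished _ (rot_of_distTriang _ hT) l)
    (shiftExtClosure_of_mem_shift (hS f hf).2 (hIJ l hl).1) ?_
  exact (shiftExtClosure N J).prop_of_iso ((shiftFunctorAdd 𝒞 1 l).app X)
    (shiftExtClosure_of_mem_shift (hS f hf).1 (hIJ l hl).2)

lemma shiftExtClosure_le_genSubcat : shiftExtClosure D I ≤ genSubcat D := by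
  intro X hX
  induction hX with
  | of X hX =>
    obtain ⟨Y, l, -, hY, rfl⟩ := hX
    exact genSub.shift Y l (genSub.of Y hY)
  | zero X hX => exact genSub.zero X hX
  | ext₂ T hT _ _ h₁ h₃ => exact genSub.ext₂ T hT h₁ h₃

/-- There are no nonzero morphisms from `X` to `Y⟦n⟧` for `X` and `Y` in `D` and `k ≤ n`. For
`k = 1` the set `D` is called negative, and for `k = 2` weakly negative. -/
def ShiftOrthogonal (D : Set 𝒞) (k : ℤ) : Prop :=
  ∀ X ∈ D, ∀ Y ∈ D, ∀ n : ℤ, k ≤ n → ∀ f : X ⟶ Y⟦n⟧, f = 0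

namespace ShiftOrthogonal

variable {k : ℤ}

lemma eq_zero (h : ShiftOrthogonal D k) (hIJ : ∀ i ∈ I, ∀ j ∈ J, i + k ≤ j) {X Y : 𝒞}
    (hX : shiftExtClosure D I X) (hY : shiftExtClosure D J Y) (f : X ⟶ Y) : f = 0 := by
  refine eq_zero_of_extClosure ?_ hX hY f
  rintro _ ⟨X, i, hi, hX, rfl⟩ _ ⟨Y, j, hj, hY, rfl⟩ f
  let e : Y⟦j⟧ ≅ Y⟦j - i⟧⟦i⟧ := (shiftFunctorAdd' 𝒞 (j - i) i j (by lia)).app Y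
  obtain ⟨g, hg⟩ := (shiftFunctor 𝒞 i).map_surjective (f ≫ e.hom)
  rw [← cancel_mono e.hom, zero_comp, ← hg, h X hX Y hY _ (by grind) g, Functor.map_zero]

lemma shiftOrthogonal_conesOf {S : MorphismProperty 𝒞} (h : ShiftOrthogonal N k)
    (hS : ∀ ⦃X Y : 𝒞⦄ (f : X ⟶ Y), S f → X ∈ N ∧ Y ∈ N) :
    ShiftOrthogonal (conesOf S) (k + 1) := by
  intro X hX Y hY n hn f
  have hX' : shiftExtClosure N {0, 1} X :=
    shiftExtClosure_conesOf_le (I := {0}) hS (by simp) X (shiftExtClosure_of_mem hX rfl)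
  have hY' : shiftExtClosure N {n, n + 1} (Y⟦n⟧) :=
    shiftExtClosure_conesOf_le (I := {n}) hS (by simp [add_comm]) _
      (shiftExtClosure_of_mem_shift hY rfl)
  exact h.eq_zero (by simp; lia) hX' hY' f

end ShiftOrthogonal

end ShiftExtClosure

section Truncation

variable {𝒞 : Type*} [Category* 𝒞] [HasZeroObject 𝒞] [HasShift 𝒞 ℤ] [Preadditive 𝒞]
  [∀ n : ℤ, (shiftFunctor 𝒞 n).Additive] [Pretriangulated 𝒞] {D : Set 𝒞}

open ObjectProperty

lemma extensionProduct_comm_le {P Q : ObjectProperty 𝒞}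
    (h : ∀ ⦃X Y : 𝒞⦄, Q X → P Y → ∀ f : X ⟶ Y⟦(1 : ℤ)⟧, f = 0) :
    extensionProduct P Q ≤ extensionProduct Q P := by
  rintro X ⟨Y, Z, f, g, δ, hT, hY, hZ⟩
  obtain ⟨e, -, -⟩ := exists_iso_binaryBiproduct_of_distTriang _ hT (h hZ hY δ)
  exact (extensionProduct Q P).prop_of_iso (e ≪≫ biprod.braiding _ _).symm
    ⟨_, _, _, _, _, binaryBiproductTriangle_distinguished Z Y, hZ, hY⟩

variable [IsTriangulated 𝒞]

lemma extensionProduct_isTriangulatedClosed₂ {P Q : ObjectProperty 𝒞}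
    [P.IsTriangulatedClosed₂] [P.IsClosedUnderIsomorphisms]
    [Q.IsTriangulatedClosed₂] [Q.IsClosedUnderIsomorphisms]
    (h : extensionProduct Q P ≤ extensionProduct P Q) :
    (extensionProduct P Q).IsTriangulatedClosed₂ := by
  suffices extensionProduct (extensionProduct P Q) (extensionProduct P Q) ≤
      extensionProduct P Q from .mk' fun T hT h₁ h₃ ↦ this _ ⟨_, _, _, _, _, hT, h₁, h₃⟩
  calc
    _ = extensionProduct P (extensionProduct (extensionProduct Q P) Q) := by
      rw [extensionProduct_assoc, ← extensionProduct_assoc Q]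
    _ ≤ extensionProduct P (extensionProduct (extensionProduct P Q) Q) :=
      monotone_extensionProduct_right _ (monotone_extensionProduct_left _ h)
    _ = extensionProduct (extensionProduct P P) (extensionProduct Q Q) := by
      rw [extensionProduct_assoc P, ← extensionProduct_assoc P P]
    _ ≤ extensionProduct P (extensionProduct Q Q) :=
      monotone_extensionProduct_left _ (extensionProduct_le_of_isTriangulatedClosed₂ le_rfl le_rfl)
    _ ≤ extensionProduct P Q :=
      monotone_extensionProduct_right _ (extensionProduct_le_of_isTriangulatedClosed₂ le_rfl le_rfl)

open Set in
lemma ShiftOrthogonal.genSubcat_le_extensionProduct (hD : ShiftOrthogonal D 2) :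
    genSubcat D ≤
      extensionProduct (shiftExtClosure D (Iic (-1))) (shiftExtClosure D (Ici 0)) := by
  have : (extensionProduct (shiftExtClosure D (Iic (-1)))
      (shiftExtClosure D (Ici 0))).IsTriangulatedClosed₂ :=
    extensionProduct_isTriangulatedClosed₂ <| extensionProduct_comm_le fun X Y hX hY f ↦
      hD.eq_zero (by grind) hX (shiftExtClosure_shift (J := Ici 1) hY 1 (by grind)) f
  suffices ∀ K, genSubcat D K → ∀ m : ℤ, extensionProduct (shiftExtClosure D (Iic (-1)))
      (shiftExtClosure D (Ici 0)) (K⟦m⟧) from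
    fun K hK ↦ prop_of_iso _ ((shiftFunctorZero 𝒞 ℤ).app K) (this K hK 0)
  intro K hK
  induction hK with
  | of X hX =>
    intro m
    rcases lt_or_ge m 0 with hm | hm
    · exact le_extensionProduct_left _ _ (shiftExtClosure_of_mem_shift hX (by grind))
    · exact le_extensionProduct_right _ _ (shiftExtClosure_of_mem_shift hX hm)
  | zero X hX =>
    exact fun m ↦ le_extensionProduct_right _ _
      (prop_of_isZero _ ((shiftFunctor 𝒞 m).map_isZero hX))
  | shift X n _ ih =>
    exact fun m ↦ prop_of_iso _ ((shiftFunctorAdd 𝒞 n m).app X) (ih (n + m))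
  | ext₂ T hT _ _ h₁ h₃ =>
    exact fun m ↦ ext_of_isTriangulatedClosed₂ _ _ (T.shift_distinguished hT m) (h₁ m) (h₃ m)

/-- Split the cone of `t` as an extension of its part in `Q` by its part in `P`; by assumption the
former lifts to `Y'`, and the cone of the lift is the new target. -/
lemma exists_trW_comp_of_extensionProduct {P Q : ObjectProperty 𝒞} {Y Y' : 𝒞}
    (hY : ∀ E, P E → ∀ f : E ⟶ Y⟦(1 : ℤ)⟧, f = 0) {t : Y ⟶ Y'}
    (ht : (extensionProduct P Q).trW t) : ∃ (Y'' : 𝒞) (s : Y' ⟶ Y''), Q.trW (t ≫ s) := by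
  obtain ⟨E, g, h, hT, E₁, E₂, a, b, c, hE, hE₁, hE₂⟩ := ht
  obtain ⟨e, he⟩ : ∃ e : E₁ ⟶ Y', a = e ≫ g := Triangle.coyoneda_exact₃ _ hT a (hY E₁ hE₁ _)
  obtain ⟨Y'', s, k, hs⟩ := distinguished_cocone_triangle e
  let o := Triangulated.someOctahedron he.symm hs (rot_of_distTriang _ hT) hE
  have hT'' : Triangle.mk o.m₁ o.m₃ (-(t ≫ s)⟦(1 : ℤ)⟧') ∈ distTriang 𝒞 := by
    rw [Functor.map_comp, ← Preadditive.neg_comp]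
    exact o.mem
  exact ⟨Y'', s, E₂, o.m₁, o.m₃, (rotate_distinguished_triangle _).2 hT'', hE₂⟩

end Truncation

section TriangleMorphism

variable {𝒞 : Type*} [Category* 𝒞] [HasZeroObject 𝒞] [HasShift 𝒞 ℤ] [Preadditive 𝒞]
  [∀ n : ℤ, (shiftFunctor 𝒞 n).Additive] [Pretriangulated 𝒞] {T T' : Triangle 𝒞}

lemma exists_eq_add_of_isIso_hom₃ (hT : T ∈ distTriang 𝒞) (hT' : T' ∈ distTriang 𝒞) (φ : T ⟶ T')
    [IsIso φ.hom₃] {W : 𝒞} (x : W ⟶ T'.obj₂)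
    (hx : (x ≫ T'.mor₂ ≫ inv φ.hom₃) ≫ T.mor₃ = 0) :
    ∃ (x₁ : W ⟶ T.obj₂) (x₂ : W ⟶ T'.obj₁), x = x₁ ≫ φ.hom₂ + x₂ ≫ T'.mor₁ := by
  obtain ⟨x₁, hx₁⟩ := T.coyoneda_exact₃ hT _ hx
  obtain ⟨x₂, hx₂⟩ := T'.coyoneda_exact₂ hT' (x - x₁ ≫ φ.hom₂) (by
    rw [Preadditive.sub_comp, Category.assoc, ← φ.comm₂, ← reassoc_of% hx₁, IsIso.inv_hom_id,
      Category.comp_id, sub_self])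
  exact ⟨x₁, x₂, by rw [← hx₂, add_sub_cancel]⟩

lemma exists_comp_eq_of_isIso_hom₃ (hT : T ∈ distTriang 𝒞) (hT' : T' ∈ distTriang 𝒞) (φ : T ⟶ T')
    [IsIso φ.hom₃] {W : 𝒞} {x₁ : W ⟶ T.obj₂} {x₂ : W ⟶ T'.obj₁}
    (hx : x₁ ≫ φ.hom₂ + x₂ ≫ T'.mor₁ = 0) :
    ∃ y : W ⟶ T.obj₁, y ≫ T.mor₁ = x₁ ∧ y ≫ φ.hom₁ = -x₂ := by
  obtain ⟨u, hu⟩ := T.coyoneda_exact₂ hT x₁ (by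
    rw [← cancel_mono φ.hom₃, zero_comp, Category.assoc, φ.comm₂, ← Category.assoc,
      eq_neg_of_add_eq_zero_left hx, Preadditive.neg_comp, Category.assoc,
      comp_distTriang_mor_zero₁₂ _ hT', comp_zero, neg_zero])
  let i : T.obj₃⟦(-1 : ℤ)⟧ ⟶ T.obj₁ := T.invRotate.mor₁
  let i' : T'.obj₃⟦(-1 : ℤ)⟧ ⟶ T'.obj₁ := T'.invRotate.mor₁
  have hi : i ≫ T.mor₁ = 0 := comp_distTriang_mor_zero₁₂ _ (inv_rot_of_distTriang _ hT)
  have i_comp : i ≫ φ.hom₁ = φ.hom₃⟦(-1 : ℤ)⟧' ≫ i' := ((invRotate 𝒞).map φ).comm₁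
  obtain ⟨z, hz⟩ : ∃ z, u ≫ φ.hom₁ + x₂ = z ≫ i' :=
    T'.invRotate.coyoneda_exact₂ (inv_rot_of_distTriang _ hT') _ (by
      change _ ≫ T'.mor₁ = 0
      rw [Preadditive.add_comp, Category.assoc, ← φ.comm₁, ← reassoc_of% hu, hx])
  refine ⟨u - z ≫ (inv φ.hom₃)⟦(-1 : ℤ)⟧' ≫ i, ?_, ?_⟩
  · simp only [Preadditive.sub_comp, Category.assoc, hi, comp_zero, sub_zero, hu]
  · simp only [Preadditive.sub_comp, Category.assoc, i_comp, Functor.map_inv,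
      IsIso.inv_hom_id_assoc, ← hz, sub_add_cancel_left]

end TriangleMorphism

section Cones

variable {𝒞 H A : Type*} [Category* 𝒞] [HasZeroObject 𝒞] [HasShift 𝒞 ℤ] [Preadditive 𝒞]
  [∀ n : ℤ, (shiftFunctor 𝒞 n).Additive] [Pretriangulated 𝒞] [Category* H] [Category* A]
  [Preadditive A] {ι : H ⥤ 𝒞} {F : H ⥤ A} {A₀ B₀ : H} {K : 𝒞} {a : ι.obj B₀ ⟶ K}
  {b : K ⟶ (ι.obj A₀)⟦(1 : ℤ)⟧}

lemma AdditiveCocone.app_eq_zero_of_distTriang [ι.Full] (s : A₀ ⟶ B₀) [IsIso (F.map s)]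
    (hT : Triangle.mk (ι.map s) a b ∈ distTriang 𝒞) {Z : A} (α : AdditiveCocone ι F K Z) {W : H}
    (hW : ∀ f : ι.obj W ⟶ (ι.obj A₀)⟦(1 : ℤ)⟧, f = 0) (x : ι.obj W ⟶ K) : α.app W x = 0 := by
  obtain ⟨y, rfl⟩ : ∃ y, x = y ≫ a := Triangle.coyoneda_exact₃ _ hT x (hW _)
  obtain ⟨y, rfl⟩ := ι.map_surjective y
  have zero₁₂ : ι.map s ≫ a = 0 := comp_distTriang_mor_zero₁₂ _ hT
  have app_a : α.app B₀ a = 0 := by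
    rw [← cancel_epi (F.map s), ← α.naturality, zero₁₂, map_zero, comp_zero]
  rw [α.naturality, app_a, comp_zero]

lemma ExtendsUniquely.of_distTriang [Preadditive H] [ι.Full] [ι.Faithful] [ι.Additive]
    [F.Additive] (s : A₀ ⟶ B₀) [IsIso (F.map s)] (hT : Triangle.mk (ι.map s) a b ∈ distTriang 𝒞)
    (hA₀ : ∀ W (f : ι.obj W ⟶ (ι.obj A₀)⟦(1 : ℤ)⟧), f = 0) {Y Y' E : 𝒞} {t : Y ⟶ Y'} {g : Y' ⟶ E}
    {h : E ⟶ Y⟦(1 : ℤ)⟧} (hT' : Triangle.mk t g h ∈ distTriang 𝒞) (e : K ≅ E)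
    (hY : ∀ W (f : ι.obj W ⟶ Y⟦(1 : ℤ)⟧), f = 0) : ExtendsUniquely ι F t := by
  obtain ⟨b', hb'⟩ : ∃ b' : ι.obj B₀ ⟶ Y', a ≫ e.hom = b' ≫ g :=
    Triangle.coyoneda_exact₃ _ hT' _ (hY _ _)
  obtain ⟨a', comm₁, comm₃⟩ :=
    complete_distinguished_triangle_morphism₁ _ _ hT hT' b' e.hom hb'
  let φ : Triangle.mk (ι.map s) a b ⟶ Triangle.mk t g h := ⟨a', b', e.hom, comm₁, hb', comm₃⟩
  have : IsIso φ.hom₃ := inferInstanceAs (IsIso e.hom)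
  exact .of_weakPushout s comm₁
    (fun W x ↦ exists_eq_add_of_isIso_hom₃ hT hT' φ x (hA₀ W _))
    (fun W x₁ x₂ hx ↦ exists_comp_eq_of_isIso_hom₃ hT hT' φ hx)

end Cones

section NegativeSubcategory

variable {𝒞 A : Type*} [Category* 𝒞] [HasZeroObject 𝒞] [HasShift 𝒞 ℤ] [Preadditive 𝒞]
  [∀ n : ℤ, (shiftFunctor 𝒞 n).Additive] [Pretriangulated 𝒞] [Category* A] [Preadditive A]
  {N : Set 𝒞} {S : MorphismProperty 𝒞} {F : ObjectProperty.FullSubcategory (· ∈ N) ⥤ A}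

namespace ShiftOrthogonal

lemma eq_zero_of_shiftExtClosure_conesOf (hN : ShiftOrthogonal N 1)
    (hS : ∀ ⦃X Y : 𝒞⦄ (f : X ⟶ Y), S f → X ∈ N ∧ Y ∈ N) {W X : 𝒞} (hW : W ∈ N)
    (hX : shiftExtClosure (conesOf S) (Set.Ici 1) X) (f : W ⟶ X) : f = 0 :=
  hN.eq_zero (I := {0}) (J := Set.Ici 1) (by grind) (shiftExtClosure_of_mem hW rfl)
    (shiftExtClosure_conesOf_le hS (by grind) X hX) f

lemma additiveCocone_app_eq_zero (hN : ShiftOrthogonal N 1)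
    (hS : ∀ ⦃X Y : 𝒞⦄ (f : X ⟶ Y), S f → X ∈ N ∧ Y ∈ N)
    (hF : (S.inverseImage (ObjectProperty.ι (· ∈ N))).IsInvertedBy F) {K : 𝒞}
    (hK : K ∈ conesOf S) {l : ℤ} (hl : 0 ≤ l) {Z : A}
    (α : AdditiveCocone (ObjectProperty.ι (· ∈ N)) F (K⟦l⟧) Z)
    (W : ObjectProperty.FullSubcategory (· ∈ N))
    (x : (ObjectProperty.ι (· ∈ N)).obj W ⟶ K⟦l⟧) : α.app W x = 0 := by
  rcases hl.eq_or_lt with rfl | hl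
  · obtain ⟨X, Y, f, a, b, hf, hT⟩ := hK
    let s : (⟨X, (hS f hf).1⟩ : ObjectProperty.FullSubcategory (· ∈ N)) ⟶ ⟨Y, (hS f hf).2⟩ :=
      ObjectProperty.homMk f
    have : IsIso (F.map s) := hF s hf
    exact AdditiveCocone.app_eq_zero_of_iso ((shiftFunctorZero 𝒞 ℤ).symm.app K)
      (AdditiveCocone.app_eq_zero_of_distTriang s hT _
        (hN _ W.property _ (hS f hf).1 1 le_rfl) _)
  · rw [hN.eq_zero_of_shiftExtClosure_conesOf hS W.property (shiftExtClosure_of_mem_shift hK hl) x]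
    exact map_zero _

lemma extendsUniquely_of_conesOf_shift [F.Additive] (hN : ShiftOrthogonal N 1)
    (hS : ∀ ⦃X Y : 𝒞⦄ (f : X ⟶ Y), S f → X ∈ N ∧ Y ∈ N)
    (hF : (S.inverseImage (ObjectProperty.ι (· ∈ N))).IsInvertedBy F) {K Y Y' : 𝒞}
    (hK : K ∈ conesOf S) {l : ℤ} (hl : 0 ≤ l) {t : Y ⟶ Y'} {g : Y' ⟶ K⟦l⟧}
    {h : K⟦l⟧ ⟶ Y⟦(1 : ℤ)⟧} (hT : Triangle.mk t g h ∈ distTriang 𝒞)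
    (hY : ∀ W ∈ N, ∀ f : W ⟶ Y⟦(1 : ℤ)⟧, f = 0) :
    ExtendsUniquely (ObjectProperty.ι (· ∈ N)) F t := by
  rcases hl.eq_or_lt with rfl | hl
  · obtain ⟨X, Y, f, a, b, hf, hT'⟩ := hK
    let s : (⟨X, (hS f hf).1⟩ : ObjectProperty.FullSubcategory (· ∈ N)) ⟶ ⟨Y, (hS f hf).2⟩ :=
      ObjectProperty.homMk f
    have : IsIso (F.map s) := hF s hf
    exact .of_distTriang s hT' (fun W ↦ hN _ W.property _ (hS f hf).1 1 le_rfl) hT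
      ((shiftFunctorZero 𝒞 ℤ).symm.app K) (fun W ↦ hY _ W.property)
  · refine .of_lift_of_forall_app_eq_zero (fun W x ↦ ?_) (fun Z α W y hy ↦ ?_)
    · obtain ⟨y, hy⟩ := Triangle.coyoneda_exact₂ _ hT x
        (hN.eq_zero_of_shiftExtClosure_conesOf hS W.property (shiftExtClosure_of_mem_shift hK hl) _)
      exact ⟨y, hy.symm⟩
    · obtain ⟨z, rfl⟩ := Triangle.coyoneda_exact₂ _ (inv_rot_of_distTriang _ hT) y hy
      let e : K⟦l - 1⟧ ≅ K⟦l⟧⟦(-1 : ℤ)⟧ :=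
        (shiftFunctorAdd' 𝒞 l (-1) (l - 1) (by lia)).app K
      exact AdditiveCocone.app_eq_zero_of_iso
        (α := α.precomp (Triangle.mk t g h).invRotate.mor₁) e
        (hN.additiveCocone_app_eq_zero hS hF hK (by lia) _ W (z ≫ e.inv))

lemma extendsUniquely_of_shiftExtClosure_conesOf [IsTriangulated 𝒞] [F.Additive]
    (hN : ShiftOrthogonal N 1) (hS : ∀ ⦃X Y : 𝒞⦄ (f : X ⟶ Y), S f → X ∈ N ∧ Y ∈ N)
    (hF : (S.inverseImage (ObjectProperty.ι (· ∈ N))).IsInvertedBy F) {E Y Y' : 𝒞}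
    (hE : shiftExtClosure (conesOf S) (Set.Ici 0) E) {t : Y ⟶ Y'} {g : Y' ⟶ E}
    {h : E ⟶ Y⟦(1 : ℤ)⟧} (hT : Triangle.mk t g h ∈ distTriang 𝒞)
    (hY : ∀ W ∈ N, ∀ f : W ⟶ Y⟦(1 : ℤ)⟧, f = 0) :
    ExtendsUniquely (ObjectProperty.ι (· ∈ N)) F t := by
  induction hE generalizing Y Y' with
  | of E hE =>
    obtain ⟨K, l, hl, hK, rfl⟩ := hE
    exact hN.extendsUniquely_of_conesOf_shift hS hF hK hl hT hY
  | zero E hE =>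
    have : IsIso t := (Triangle.isZero₃_iff_isIso₁ _ hT).1 hE
    exact .of_isIso _ F t
  | ext₂ T hT' hE₁ _ ih₁ ih₃ =>
    obtain ⟨Y₁, t', h', hT''⟩ := distinguished_cocone_triangle₁ (g ≫ T.mor₂)
    let o := Triangulated.someOctahedron' rfl hT hT' hT''
    have hY₁ (W : 𝒞) (hW : W ∈ N) (f : W ⟶ Y₁⟦(1 : ℤ)⟧) : f = 0 := by
      have hE₁' := shiftExtClosure_shift (J := Set.Ici 1) hE₁ 1 (by grind)
      obtain ⟨f', rfl⟩ := Triangle.coyoneda_exact₂ _ (Triangle.shift_distinguished _ o.mem 1) f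
        (hN.eq_zero_of_shiftExtClosure_conesOf hS hW hE₁' _)
      rw [hY W hW f']
      exact zero_comp
    rw [← o.comm₁]
    exact (ih₁ o.mem hY).comp (ih₃ hT'' hY₁)

lemma hasEnoughExtensions [IsTriangulated 𝒞] [F.Additive]
    (hN : ShiftOrthogonal N 1) (hS : ∀ ⦃X Y : 𝒞⦄ (f : X ⟶ Y), S f → X ∈ N ∧ Y ∈ N)
    (hF : (S.inverseImage (ObjectProperty.ι (· ∈ N))).IsInvertedBy F) {Y : 𝒞} (hY : Y ∈ N) :
    HasEnoughExtensions (ObjectProperty.ι (· ∈ N)) F Y (genSubcat (conesOf S)).trW := by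
  intro Y' t ht
  have hY_left (E : 𝒞) (hE : shiftExtClosure (conesOf S) (Set.Iic (-1)) E)
      (f : E ⟶ Y⟦(1 : ℤ)⟧) : f = 0 :=
    hN.eq_zero (I := Set.Iic 0) (J := {1}) (by simp; lia)
      (shiftExtClosure_conesOf_le hS (by grind) E hE) (shiftExtClosure_of_mem_shift hY rfl) f
  obtain ⟨Y'', s, E, g, h, hT, hE⟩ := exists_trW_comp_of_extensionProduct hY_left
    (ObjectProperty.trW_monotone (hN.shiftOrthogonal_conesOf hS).genSubcat_le_extensionProduct _ ht)
  exact ⟨Y'', s, ⟨E, g, h, hT, shiftExtClosure_le_genSubcat E hE⟩,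
    hN.extendsUniquely_of_shiftExtClosure_conesOf hS hF hE hT fun W hW ↦ hN W hW Y hY 1 le_rfl⟩

end ShiftOrthogonal

end NegativeSubcategory

section WeightStructure

variable {𝒞 : Type*} [Category* 𝒞] [HasZeroObject 𝒞] [HasShift 𝒞 ℤ] [Preadditive 𝒞]
  [∀ n : ℤ, (shiftFunctor 𝒞 n).Additive] [Pretriangulated 𝒞]

lemma WeightStructure.shift_natCast_mem_GE (w : WeightStructure 𝒞) {X : 𝒞} (hX : X ∈ w.GE) :
    ∀ k : ℕ, X⟦(k : ℤ)⟧ ∈ w.GE := by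
  intro k
  induction k with
  | zero =>
    let e := (shiftFunctorZero 𝒞 ℤ).app X
    exact w.retract_GE hX e.hom e.inv e.hom_inv_id
  | succ k ih =>
    let e := (shiftFunctorAdd' 𝒞 (k : ℤ) 1 (k + 1 : ℕ) (by simp)).app X
    exact w.retract_GE (w.shift_GE _ ih) e.hom e.inv e.hom_inv_id

lemma WeightStructure.shiftOrthogonal_heart (w : WeightStructure 𝒞) :
    ShiftOrthogonal w.heart 1 := by
  intro X hX Y hY n hn f
  obtain ⟨k, rfl⟩ : ∃ k : ℕ, n = k + 1 := ⟨(n - 1).toNat, by lia⟩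
  let e := (shiftFunctorAdd' 𝒞 (k : ℤ) 1 _ rfl).app Y
  rw [← cancel_mono e.hom, zero_comp]
  exact w.orthogonality X hX.1 _ (w.shift_natCast_mem_GE hY.2 k) _

end WeightStructure

section UniversalLocalization

variable {𝒞 A : Type*} [Category* 𝒞] [HasZeroObject 𝒞] [HasShift 𝒞 ℤ] [Preadditive 𝒞]
  [∀ n : ℤ, (shiftFunctor 𝒞 n).Additive] [Pretriangulated 𝒞] [Category* A]

lemma trW_genSubcat_conesOf {S : MorphismProperty 𝒞} {X Y : 𝒞} {f : X ⟶ Y} (hf : S f) :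
    (genSubcat (conesOf S)).trW f := by
  obtain ⟨Z, a, b, hT⟩ := distinguished_cocone_triangle f
  exact .mk _ hT (genSub.of Z ⟨X, Y, f, a, b, hf, hT⟩)

/-- The restriction to the full subcategory on `N` of the localization functor from `𝒞` to its
Verdier quotient by the triangulated subcategory generated by the cones of `S`. -/
noncomputable abbrev verdierQuotientRestriction (N : Set 𝒞) (S : MorphismProperty 𝒞) :
    ObjectProperty.FullSubcategory (· ∈ N) ⥤ (genSubcat (conesOf S)).trW.Localization :=
  ObjectProperty.ι (· ∈ N) ⋙ (genSubcat (conesOf S)).trW.Q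

lemma isInvertedBy_toInducedCategory_comp {N : Set 𝒞} {S : MorphismProperty 𝒞}
    (G : InducedCategory _ (verdierQuotientRestriction N S).obj ⥤ A) :
    (S.inverseImage (ObjectProperty.ι (· ∈ N))).IsInvertedBy
      (toInducedCategory (verdierQuotientRestriction N S) ⋙ G) := by
  intro X Y s hs
  have : IsIso ((verdierQuotientRestriction N S).map s) :=
    Localization.inverts (genSubcat (conesOf S)).trW.Q _ _ (trW_genSubcat_conesOf hs)
  have := isIso_toInducedCategory_map (verdierQuotientRestriction N S) s
  exact inferInstanceAs (IsIso (G.map ((toInducedCategory _).map s)))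

theorem statement19_general [IsTriangulated 𝒞] [Preadditive A] {N : Set 𝒞}
    (hN : ShiftOrthogonal N 1) {S : MorphismProperty 𝒞}
    (hS : ∀ ⦃X Y : 𝒞⦄ (f : X ⟶ Y), S f → X ∈ N ∧ Y ∈ N)
    (F : ObjectProperty.FullSubcategory (· ∈ N) ⥤ A) [F.Additive] :
    ((∃ G : InducedCategory _ (verdierQuotientRestriction N S).obj ⥤ A,
        G.Additive ∧ toInducedCategory (verdierQuotientRestriction N S) ⋙ G = F) ↔
      (S.inverseImage (ObjectProperty.ι (· ∈ N))).IsInvertedBy F) ∧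
    ((S.inverseImage (ObjectProperty.ι (· ∈ N))).IsInvertedBy F →
      ∃! G : InducedCategory _ (verdierQuotientRestriction N S).obj ⥤ A,
        G.Additive ∧ toInducedCategory (verdierQuotientRestriction N S) ⋙ G = F) := by
  have existsUnique (hF : (S.inverseImage (ObjectProperty.ι (· ∈ N))).IsInvertedBy F) :
      ∃! G : InducedCategory _ (verdierQuotientRestriction N S).obj ⥤ A,
        G.Additive ∧ toInducedCategory (verdierQuotientRestriction N S) ⋙ G = F :=
    existsUnique_additive_factorization_toInducedCategory fun Y _ ↦
      (hN.hasEnoughExtensions hS hF Y.property).eval_bijective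
  refine ⟨⟨?_, fun hF ↦ (existsUnique hF).exists⟩, existsUnique⟩
  rintro ⟨G, -, rfl⟩
  exact isInvertedBy_toInducedCategory_comp G

end UniversalLocalization

/-- Theorem: `u : Hw ⥤ H` is the universal additive functor inverting `S`: an additive
functor `F : Hw ⥤ A'` factors through `u` if and only if it makes all the elements of
`S` invertible, and in that case the factorization is unique. -/
theorem statement19 (w : WeightStructure C) (S : MorphismProperty C)
    (hS : ∀ ⦃X Y : C⦄ (f : X ⟶ Y), S f → X ∈ w.heart ∧ Y ∈ w.heart)
    {A' : Type u'} [Category.{v'} A'] [Preadditive A'] [HasFiniteBiproducts A']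
    (F : HeartCat w ⥤ A') [F.Additive] :
    ((∃ G : HeartLoc w S ⥤ A', G.Additive ∧ uHeart w S ⋙ G = F) ↔
      ∀ (X Y : HeartCat w) (s : X.obj ⟶ Y.obj), S s →
        IsIso (F.map (show X ⟶ Y from ObjectProperty.homMk s))) ∧
    ((∀ (X Y : HeartCat w) (s : X.obj ⟶ Y.obj), S s →
        IsIso (F.map (show X ⟶ Y from ObjectProperty.homMk s))) →
      ∃! G : HeartLoc w S ⥤ A', G.Additive ∧ uHeart w S ⋙ G = F) := by
  have isInvertedBy_iff : (S.inverseImage (ObjectProperty.ι (· ∈ w.heart))).IsInvertedBy F ↔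
      ∀ (X Y : HeartCat w) (s : X.obj ⟶ Y.obj), S s →
        IsIso (F.map (show X ⟶ Y from ObjectProperty.homMk s)) :=
    ⟨fun h X Y s hs ↦ h (ObjectProperty.homMk s) hs, fun h X Y f hf ↦ h X Y f.hom hf⟩
  rw [← isInvertedBy_iff]
  exact statement19_general w.shiftOrthogonal_heart hS F

end Statement19
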